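/- For every real ε > 0 there exists t₀ such that for every even integer t ≥ t₀ the following holds. Let V ⊆ 𝔽₂^t be the set of vectors of even Hamming weight and let G₀ be the simple graph on V in which distinct u, v are adjacent iff u · v = 1. Then the number of functions f from a fixed t-element set S to V whose image f(S) is an independent set of G₀ is at most 2^{(−3/8 + ε)·t²} · |V|^t, where |V| = 2^{t−1}. -/

import Mathlib

/-!
Independence in `G₀` together with even weight makes all scalar products of the values of `f`
vanish, so it suffices to count families of pairwise orthogonal isotropic vectors. Choose the
values one at a time and let `W` be the totally isotropic span of the earlier ones. The next value
either lies in `W`, which has dimension at most `m = ⌈t / 2⌉`, or it lies outside `W` but in the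
orthogonal complement, of dimension `t - dim W`, and enlarges the span. At most `m` enlargements
occur, and they become cheaper as `W` grows: from dimension `m - d` there are at most `2 ^ (m + d)`
choices. With a factor `2 ^ t` for the pattern of alternatives, the count is at most
`2 ^ (t + m * t + (1 + 2 + ⋯ + m))`, and the exponent is `5 * t ^ 2 / 8 + O(t)`, whereas
`|V| ^ t = 2 ^ (t ^ 2 - t)`.
-/

open LinearMap (BilinForm)
open Module (finrank)

section Orthogonal

variable {R M : Type*} [CommSemiring R] [AddCommMonoid M] [Module R M] {B : BilinForm R M}

theorem orthogonal_sup (W U : Submodule R M) :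
    B.orthogonal (W ⊔ U) = B.orthogonal W ⊓ B.orthogonal U := by
  refine le_antisymm (le_inf (BilinForm.orthogonal_le le_sup_left)
    (BilinForm.orthogonal_le le_sup_right)) fun x ⟨hW, hU⟩ n hn => ?_
  obtain ⟨w, hw, u, hu, rfl⟩ := Submodule.mem_sup.1 hn
  rw [map_add, LinearMap.add_apply, hW w hw, hU u hu, add_zero]

theorem mem_orthogonal_span_singleton {v x : M} : x ∈ B.orthogonal (R ∙ v) ↔ B v x = 0 := by
  refine ⟨fun h => h v (Submodule.mem_span_singleton_self v), fun h n hn => ?_⟩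
  obtain ⟨c, rfl⟩ := Submodule.mem_span_singleton.1 hn
  rw [map_smul, LinearMap.smul_apply, h, smul_zero]

theorem mem_orthogonal_sup_span_singleton {W : Submodule R M} {v x : M} :
    x ∈ B.orthogonal (W ⊔ R ∙ v) ↔ x ∈ B.orthogonal W ∧ B v x = 0 := by
  rw [orthogonal_sup, Submodule.mem_inf, mem_orthogonal_span_singleton]

theorem sup_span_singleton_le_orthogonal (hB : B.IsRefl) {W : Submodule R M}
    (hW : W ≤ B.orthogonal W) {v : M} (hv : v ∈ B.orthogonal W) (hvv : B v v = 0) :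
    W ⊔ R ∙ v ≤ B.orthogonal (W ⊔ R ∙ v) := by
  refine sup_le (fun w hw => ?_) ((Submodule.span_singleton_le_iff_mem _ _).2 ?_)
  · exact mem_orthogonal_sup_span_singleton.2 ⟨hW hw, hB w v (hv w hw)⟩
  · exact mem_orthogonal_sup_span_singleton.2 ⟨hv, hvv⟩

theorem two_mul_finrank_le_of_le_orthogonal {K V : Type*} [Field K] [AddCommGroup V] [Module K V]
    [FiniteDimensional K V] {B : BilinForm K V} (hB : B.Nondegenerate)
    {W : Submodule K V} (hW : W ≤ B.orthogonal W) : 2 * finrank K W ≤ finrank K V := by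
  have hle : finrank K W ≤ finrank K V - finrank K W :=
    BilinForm.finrank_orthogonal hB W ▸ Submodule.finrank_mono hW
  have := Submodule.finrank_le W
  lia

end Orthogonal

section IsotropicFamilies

variable {R M : Type*} [CommSemiring R] [AddCommMonoid M] [Module R M] {B : BilinForm R M}

/-- The families indexed by `ι` of pairwise orthogonal isotropic vectors, all orthogonal to `W`.
In a count by successive choices, `W` is the span of the vectors chosen earlier. -/
def isotropicFamilies (B : BilinForm R M) (W : Submodule R M) (ι : Type*) : Set (ι → M) :=
  {f | (∀ i, f i ∈ B.orthogonal W) ∧ ∀ i j, B (f i) (f j) = 0}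

theorem natCard_isotropicFamilies_congr (W : Submodule R M) {ι κ : Type*} (e : ι ≃ κ) :
    Nat.card (isotropicFamilies B W ι) = Nat.card (isotropicFamilies B W κ) :=
  Nat.card_congr <| (e.arrowCongr (Equiv.refl M)).subtypeEquiv fun f => by
    simp [isotropicFamilies, e.symm.forall_congr_left]

theorem mem_isotropicFamilies_option_iff (hB : B.IsRefl) {W : Submodule R M} {ι : Type*}
    {f : Option ι → M} :
    f ∈ isotropicFamilies B W (Option ι) ↔
      (f none ∈ B.orthogonal W ∧ B (f none) (f none) = 0) ∧
        (fun i => f (some i)) ∈ isotropicFamilies B (W ⊔ R ∙ f none) ι := by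
  simp only [isotropicFamilies, Set.mem_ofPred_eq, Option.forall, mem_orthogonal_sup_span_singleton]
  have hcomm (i : ι) : B (f (some i)) (f none) = 0 ↔ B (f none) (f (some i)) = 0 :=
    hB.eq_iff
  simp only [hcomm, forall_and]
  tauto

/-- Splitting off the value at `none`: for the remaining values, it joins the span `W` of the
earlier choices. -/
def isotropicFamiliesOptionEquiv (hB : B.IsRefl) (W : Submodule R M) (ι : Type*) :
    isotropicFamilies B W (Option ι) ≃
      Σ v : {v : M // v ∈ B.orthogonal W ∧ B v v = 0},
        isotropicFamilies B (W ⊔ R ∙ v.1) ι where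
  toFun f := ⟨⟨f.1 none, ((mem_isotropicFamilies_option_iff hB).1 f.2).1⟩,
    ⟨fun i => f.1 (some i), ((mem_isotropicFamilies_option_iff hB).1 f.2).2⟩⟩
  invFun p := ⟨fun o => o.elim p.1.1 p.2.1, (mem_isotropicFamilies_option_iff hB).2 ⟨p.1.2, p.2.2⟩⟩
  left_inv f := by
    ext (_ | i) <;> rfl
  right_inv _ := rfl

open scoped Classical in
theorem natCard_isotropicFamilies_option [Fintype M] (hB : B.IsRefl) (W : Submodule R M)
    (ι : Type*) [Finite ι] :
    Nat.card (isotropicFamilies B W (Option ι)) =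
      ∑ v with v ∈ B.orthogonal W ∧ B v v = 0,
        Nat.card (isotropicFamilies B (W ⊔ R ∙ v) ι) := by
  rw [Nat.card_congr (isotropicFamiliesOptionEquiv hB W ι), Nat.card_sigma]
  exact (Finset.sum_subtype _ (by simp) fun v => Nat.card (isotropicFamilies B (W ⊔ R ∙ v) ι)).symm

theorem natCard_isotropicFamilies_option_le [Finite M] (hB : B.IsRefl) (W : Submodule R M)
    (ι : Type*) [Finite ι] {a b : ℕ}
    (ha : Nat.card (isotropicFamilies B W ι) ≤ a)
    (hb : ∀ v ∈ B.orthogonal W, B v v = 0 → v ∉ W →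
      Nat.card (isotropicFamilies B (W ⊔ R ∙ v) ι) ≤ b) :
    Nat.card (isotropicFamilies B W (Option ι)) ≤
      Nat.card W * a + Nat.card (B.orthogonal W) * b := by
  classical
  have := Fintype.ofFinite M
  rw [natCard_isotropicFamilies_option hB, ← Finset.sum_filter_add_sum_filter_not _ (· ∈ W)]
  refine add_le_add ((Finset.sum_le_card_nsmul _ _ a fun v hv => ?_).trans ?_)
    ((Finset.sum_le_card_nsmul _ _ b fun v hv => ?_).trans ?_)
  · have hvW : v ∈ W := (Finset.mem_filter.1 hv).2
    rwa [sup_eq_left.2 ((Submodule.span_singleton_le_iff_mem v W).2 hvW)]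
  · rw [smul_eq_mul, Nat.card_eq_fintype_card, Fintype.card_subtype]
    gcongr
    exact Finset.subset_univ _
  · simp only [Finset.mem_filter, Finset.mem_univ, true_and] at hv
    exact hb v hv.1.1 hv.1.2 hv.2
  · rw [smul_eq_mul, Nat.card_eq_fintype_card, Fintype.card_subtype, Finset.filter_filter]
    gcongr with v
    exact fun h => h.1.1

end IsotropicFamilies

section FiniteField

variable {K V : Type*} [Field K] [Finite K] [AddCommGroup V] [Module K V] [FiniteDimensional K V]
  {B : BilinForm K V} {m : ℕ}

theorem natCard_isotropicFamilies_option_le_pow (hB : B.Nondegenerate) (hrefl : B.IsRefl)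
    (hm : finrank K V ≤ 2 * m) (ι : Type*) [Finite ι] {d : ℕ} {W : Submodule K V}
    (hd : finrank K W + d = m) {a b : ℕ} (ha : Nat.card (isotropicFamilies B W ι) ≤ a)
    (hb : ∀ v ∈ B.orthogonal W, B v v = 0 → v ∉ W →
      Nat.card (isotropicFamilies B (W ⊔ K ∙ v) ι) ≤ b) :
    Nat.card (isotropicFamilies B W (Option ι)) ≤
      Nat.card K ^ m * a + Nat.card K ^ (m + d) * b := by
  have : Finite V := Module.finite_of_finite K
  have hK : 0 < Nat.card K := Nat.card_pos
  have hcardW : Nat.card W ≤ Nat.card K ^ m := by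
    rw [Module.natCard_eq_pow_finrank (K := K)]
    exact Nat.pow_le_pow_right hK (by lia)
  have hcardOrth : Nat.card (B.orthogonal W) ≤ Nat.card K ^ (m + d) := by
    rw [Module.natCard_eq_pow_finrank (K := K), BilinForm.finrank_orthogonal hB]
    exact Nat.pow_le_pow_right hK (by lia)
  calc Nat.card (isotropicFamilies B W (Option ι))
      ≤ Nat.card W * a + Nat.card (B.orthogonal W) * b :=
        natCard_isotropicFamilies_option_le hrefl W ι ha hb
    _ ≤ Nat.card K ^ m * a + Nat.card K ^ (m + d) * b := by gcongr

/-- The codimension `d` of `W` in dimension `m` bounds the number of times that adjoining a vector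
can still enlarge the span; the `j`-th last of these enlargements costs a factor
`|K| ^ (m + j)`. -/
theorem natCard_isotropicFamilies_le (hB : B.Nondegenerate) (hrefl : B.IsRefl)
    (hm : finrank K V ≤ 2 * m) (ι : Type*) [Finite ι] {d : ℕ} {W : Submodule K V}
    (hW : W ≤ B.orthogonal W) (hd : finrank K W + d = m) :
    Nat.card (isotropicFamilies B W ι) ≤
      2 ^ Nat.card ι * Nat.card K ^ (m * Nat.card ι + (d + 1).choose 2) := by
  have hK : 0 < Nat.card K := Nat.card_pos
  induction ι using Finite.induction_empty_option generalizing d W with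
  | of_equiv e ih =>
    rw [← natCard_isotropicFamilies_congr W e, ← Nat.card_congr e]
    exact ih hW hd
  | h_empty =>
    exact (Finite.card_le_one_iff_subsingleton.2 inferInstance).trans
      (Nat.one_le_iff_ne_zero.2 (by positivity))
  | @h_option ι _ ih =>
    set k := Nat.card ι
    set q := Nat.card K
    have hextend : ∀ v ∈ B.orthogonal W, B v v = 0 → v ∉ W →
        Nat.card (isotropicFamilies B (W ⊔ K ∙ v) ι) ≤ 2 ^ k * q ^ (m * k + d.choose 2) := by
      intro v hv hvv hvW
      have hiso := sup_span_singleton_le_orthogonal hrefl hW hv hvv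
      have hle := two_mul_finrank_le_of_le_orthogonal hB hiso
      have hrank := Submodule.finrank_sup_span_singleton hvW
      obtain ⟨e, rfl⟩ : ∃ e, d = e + 1 := ⟨d - 1, by lia⟩
      exact ih hiso (by lia)
    have hchoose : (d + 1).choose 2 = d + d.choose 2 := by
      rw [Nat.choose_succ_succ' d 1, Nat.choose_one_right]
    calc Nat.card (isotropicFamilies B W (Option ι))
        ≤ q ^ m * (2 ^ k * q ^ (m * k + (d + 1).choose 2)) +
            q ^ (m + d) * (2 ^ k * q ^ (m * k + d.choose 2)) :=
          natCard_isotropicFamilies_option_le_pow hB hrefl hm ι hd (ih hW hd) hextend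
      _ = 2 ^ (k + 1) * q ^ (m * (k + 1) + (d + 1).choose 2) := by
          rw [hchoose]
          ring
      _ = 2 ^ Nat.card (Option ι) * q ^ (m * Nat.card (Option ι) + (d + 1).choose 2) := by
          rw [Finite.card_option]

theorem natCard_pairwise_orthogonal_le (hB : B.Nondegenerate) (hrefl : B.IsRefl)
    (hm : finrank K V ≤ 2 * m) (ι : Type*) [Finite ι] :
    Nat.card {f : ι → V // ∀ i j, B (f i) (f j) = 0} ≤
      2 ^ Nat.card ι * Nat.card K ^ (m * Nat.card ι + (m + 1).choose 2) := by
  have hbot : isotropicFamilies B ⊥ ι = {f | ∀ i j, B (f i) (f j) = 0} := by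
    simp [isotropicFamilies]
  have hle := natCard_isotropicFamilies_le hB hrefl hm ι (bot_le (a := B.orthogonal ⊥))
    (by rw [finrank_bot, zero_add])
  rwa [hbot] at hle

end FiniteField

section DotProduct

variable {n : Type*} [Fintype n]

theorem dotProductBilin_isRefl (R : Type*) [CommSemiring R] :
    BilinForm.IsRefl (dotProductBilin R R : BilinForm R (n → R)) := fun v w h =>
  (dotProduct_comm w v).trans h

theorem dotProductBilin_nondegenerate (R : Type*) [CommSemiring R] :
    BilinForm.Nondegenerate (dotProductBilin R R : BilinForm R (n → R)) :=
  ⟨fun v hv => dotProduct_eq_zero v hv,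
    fun v hv => dotProduct_eq_zero v fun w => (dotProduct_comm v w).trans (hv w)⟩

theorem dotProduct_self_eq_hammingNorm (v : n → ZMod 2) : v ⬝ᵥ v = hammingNorm v := by
  have hsq : ∀ a : ZMod 2, a * a = if a ≠ 0 then 1 else 0 := by decide
  simp only [dotProduct, hsq, Finset.sum_boole, hammingNorm]

theorem dotProduct_eq_zero_of_ne_imp_ne_one {v w : n → ZMod 2} (hv : Even (hammingNorm v))
    (hvw : v ≠ w → v ⬝ᵥ w ≠ 1) : v ⬝ᵥ w = 0 := by
  by_cases h : v = w
  · rw [← h, dotProduct_self_eq_hammingNorm, ZMod.natCast_eq_zero_iff_even]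
    exact hv
  · have eq_zero_of_ne_one : ∀ a : ZMod 2, a ≠ 1 → a = 0 := by decide
    exact eq_zero_of_ne_one _ (hvw h)

theorem natCard_maps_with_independent_image_le {m : ℕ} (hm : Fintype.card n ≤ 2 * m)
    (S : Type*) [Finite S] :
    Nat.card
        {f : S → {v : n → ZMod 2 // Even (hammingNorm v)} //
          ∀ x y : S, f x ≠ f y → (f x).1 ⬝ᵥ (f y).1 ≠ 1} ≤
      2 ^ (Nat.card S + (m * Nat.card S + (m + 1).choose 2)) := by
  have hle := natCard_pairwise_orthogonal_le (dotProductBilin_nondegenerate (ZMod 2) (n := n))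
    (dotProductBilin_isRefl _) (by rwa [Module.finrank_fintype_fun_eq_card]) S
  rw [Nat.card_zmod, ← pow_add] at hle
  refine le_trans (Nat.card_le_card_of_injective (fun f => ⟨fun x => (f.1 x).1, fun x y =>
    dotProduct_eq_zero_of_ne_imp_ne_one (f.1 x).2 fun h => f.2 x y (mt (congrArg _) h)⟩) ?_) hle
  intro f g hfg
  ext x : 3
  exact congrFun (congrArg Subtype.val hfg) x

end DotProduct

theorem count_exponent_le {ε : ℝ} {t m : ℕ} (ht₀ : 0 < t) (ht : 4 ≤ ε * t) (hm : 2 * m ≤ t + 1) :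
    ((t + (m * t + (m + 1).choose 2) : ℕ) : ℝ) ≤ (-(3 : ℝ) / 8 + ε) * t ^ 2 + (t - 1) * t := by
  have ht₁ : (1 : ℝ) ≤ t := mod_cast ht₀
  have hm' : (m : ℝ) ≤ (t + 1) / 2 := by
    rw [le_div_iff₀ two_pos, mul_comm]
    exact_mod_cast hm
  calc ((t + (m * t + (m + 1).choose 2) : ℕ) : ℝ)
      = t + (m * t + (m + 1) * m / 2) := by
        push_cast [Nat.cast_choose_two]
        ring
    _ ≤ t + ((t + 1) / 2 * t + ((t + 1) / 2 + 1) * ((t + 1) / 2) / 2) := by gcongr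
    _ = 5 / 8 * t ^ 2 + 2 * t + 3 / 8 := by ring
    _ ≤ 5 / 8 * t ^ 2 - t + 4 * t := by linarith
    _ ≤ 5 / 8 * t ^ 2 - t + ε * t * t := by gcongr
    _ = (-(3 : ℝ) / 8 + ε) * t ^ 2 + (t - 1) * t := by ring

theorem count_maps_with_independent_image_general (ε : ℝ) (hε : 0 < ε) :
    ∃ t₀ : ℕ, ∀ t : ℕ, t₀ ≤ t →
      ∀ (S : Type*) [Finite S], Nat.card S = t →
        (Nat.card
            {f : S → {v : Fin t → ZMod 2 //
                Even (Finset.univ.filter (fun i => v i ≠ 0)).card} //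
              ∀ x y : S, f x ≠ f y →
                ∑ i, (f x : Fin t → ZMod 2) i * (f y : Fin t → ZMod 2) i ≠ 1} : ℝ)
          ≤ (2 : ℝ) ^ ((-(3 : ℝ) / 8 + ε) * t ^ 2) * ((2 : ℝ) ^ ((t : ℝ) - 1)) ^ t := by
  refine ⟨⌈4 / ε⌉₊, fun t ht S _ hS => ?_⟩
  have ht₀ : 0 < t := (Nat.ceil_pos.2 (by positivity)).trans_le ht
  have htε : 4 ≤ ε * t := (div_le_iff₀' hε).1 (Nat.ceil_le.1 ht)
  set m := (t + 1) / 2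
  have hcount := natCard_maps_with_independent_image_le (n := Fin t) (m := m)
    (by rw [Fintype.card_fin]; lia) S
  rw [hS] at hcount
  calc _ ≤ (2 : ℝ) ^ (t + (m * t + (m + 1).choose 2)) := mod_cast hcount
    _ = (2 : ℝ) ^ ((t + (m * t + (m + 1).choose 2) : ℕ) : ℝ) := (Real.rpow_natCast _ _).symm
    _ ≤ (2 : ℝ) ^ ((-(3 : ℝ) / 8 + ε) * t ^ 2 + (t - 1) * t) :=
        Real.rpow_le_rpow_of_exponent_le one_le_two (count_exponent_le ht₀ htε (by lia))
    _ = (2 : ℝ) ^ ((-(3 : ℝ) / 8 + ε) * t ^ 2) * ((2 : ℝ) ^ ((t : ℝ) - 1)) ^ t := by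
        rw [Real.rpow_add two_pos, Real.rpow_mul_natCast two_pos.le]

/-- For every `ε > 0` there is `t₀` such that for every even `t ≥ t₀` and every fixed
`t`-element set `S`, the number of functions `f : S → V` (where `V` is the set of
even-weight vectors of `𝔽₂^t`, so `|V| = 2^{t-1}`) whose image is an independent set of
the graph `G₀` (distinct `u, v` adjacent iff `u ⬝ v = 1`) is at most
`2^{(-3/8 + ε) t²} · |V|^t`. -/
theorem count_maps_with_independent_image (ε : ℝ) (hε : 0 < ε) :
    ∃ t₀ : ℕ, ∀ t : ℕ, t₀ ≤ t → Even t →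
      ∀ (S : Type) [Fintype S], Fintype.card S = t →
        (Nat.card
            {f : S → {v : Fin t → ZMod 2 //
                Even (Finset.univ.filter (fun i => v i ≠ 0)).card} //
              ∀ x y : S, f x ≠ f y →
                ∑ i, (f x : Fin t → ZMod 2) i * (f y : Fin t → ZMod 2) i ≠ 1} : ℝ)
          ≤ (2 : ℝ) ^ ((-(3 : ℝ) / 8 + ε) * t ^ 2) * ((2 : ℝ) ^ ((t : ℝ) - 1)) ^ t := by
  obtain ⟨t₀, hcount⟩ := count_maps_with_independent_image_general ε hε
  exact ⟨t₀, fun t ht _ S _ hS => hcount t ht S (Nat.card_eq_fintype_card.trans hS)⟩
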